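/- Let α > −1 and n ≥ 1, let a, b ∈ ℂ \ {0} and c ∈ 𝔻, set ψ(z) = a z^n/(n! (1 − conj(c) z)^{n+α+2}) and φ(z) = c + b z/(1 − conj(c) z), assume φ maps 𝔻 into 𝔻 and D_{ψ,φ,n} is bounded on A_α². Then D_{ψ,φ,n} is normal (commutes with its adjoint) if and only if b ∈ ℝ \ {0} or c = 0. -/

import Mathlib

open Complex Metric Set

noncomputable section

/-- The open unit disk in `ℂ`. -/
def unitDisk : Set ℂ := Metric.ball 0 1

/-- `wb2 α j` is `β(j)² = j!·Γ(α+2)/Γ(j+α+2)`, the square of the norm of `z^j` in `A_α²`. -/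
def wb2 (α : ℝ) (j : ℕ) : ℝ :=
  (j.factorial : ℝ) * Real.Gamma (α + 2) / Real.Gamma ((j : ℝ) + α + 2)

/-- The `j`-th Taylor coefficient of `f` at `0`. -/
def tcoeff (f : ℂ → ℂ) (j : ℕ) : ℂ := iteratedDeriv j f 0 / (j.factorial : ℂ)

/-- An abstract model of the weighted Bergman space `A_α²`: a complex Hilbert space `H`
whose elements are (identified with) the analytic functions on the unit disk with
square-summable weighted Taylor coefficients, with the weighted `ℓ²` inner product. -/
structure BergmanModel (α : ℝ) (H : Type) [NormedAddCommGroup H]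
    [InnerProductSpace ℂ H] where
  emb : H →ₗ[ℂ] (ℂ → ℂ)
  analyticOn : ∀ f : H, AnalyticOnNhd ℂ (emb f) unitDisk
  summable_norm : ∀ f : H, Summable (fun j => ‖tcoeff (emb f) j‖ ^ 2 * wb2 α j)
  inj : ∀ f g : H, Set.EqOn (emb f) (emb g) unitDisk → f = g
  exists_rep : ∀ F : ℂ → ℂ, AnalyticOnNhd ℂ F unitDisk →
      Summable (fun j => ‖tcoeff F j‖ ^ 2 * wb2 α j) →
      ∃ f : H, Set.EqOn (emb f) F unitDisk
  inner_eq : ∀ f g : H,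
      (@inner ℂ H _ f g) =
        ∑' j : ℕ, (starRingEnd ℂ) (tcoeff (emb f) j) * tcoeff (emb g) j * (wb2 α j : ℂ)

/-- The derivative-evaluation kernel `K_w^{(m)}(z) = m!·z^m / (β(m)²·(1-conj(w)·z)^(m+α+2))`. -/
def kern (α : ℝ) (m : ℕ) (w z : ℂ) : ℂ :=
  (m.factorial : ℂ) * z ^ m /
    ((wb2 α m : ℂ) * (1 - (starRingEnd ℂ) w * z) ^ ((m : ℂ) + (α : ℂ) + 2))


lemma hasSum_congr' {E : Type} [AddCommMonoid E] [TopologicalSpace E] {f g : ℕ → E} {x : E}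
    (h : ∀ j, f j = g j) : HasSum f x ↔ HasSum g x := by
  rw [funext h]

lemma unitDisk_isOpen : IsOpen unitDisk := Metric.isOpen_ball

lemma mem_unitDisk {z : ℂ} : z ∈ unitDisk ↔ ‖z‖ < 1 := by simp [unitDisk]

lemma zero_mem_unitDisk : (0 : ℂ) ∈ unitDisk := by simp [mem_unitDisk]

lemma tcoeff_hasSum {f : ℂ → ℂ} (hf : AnalyticOnNhd ℂ f unitDisk) {z : ℂ} (hz : z ∈ unitDisk) :
    HasSum (fun j => tcoeff f j * z ^ j) (f z) := by
  have := Complex.hasSum_taylorSeries_on_ball (c := 0) (r := 1) (f := f) (z := z)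
    (hf.differentiableOn) hz
  refine (hasSum_congr' fun j => ?_).mpr this
  simp only [tcoeff, smul_eq_mul, sub_zero]
  field_simp

lemma tcoeff_unique {f : ℂ → ℂ} {a : ℕ → ℂ}
    (h : ∀ z ∈ unitDisk, HasSum (fun j => a j * z ^ j) (f z)) (j : ℕ) : tcoeff f j = a j := by
  have h1 : HasFPowerSeriesAt f (FormalMultilinearSeries.ofScalars ℂ a) 0 := by
    rw [hasFPowerSeriesAt_iff]
    filter_upwards [unitDisk_isOpen.mem_nhds zero_mem_unitDisk] with z hz
    simpa [FormalMultilinearSeries.coeff_ofScalars, mul_comm] using h z hz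
  have h2 := (h1.analyticAt).hasFPowerSeriesAt
  have := h2.eq_formalMultilinearSeries h1
  have := congr_arg (FormalMultilinearSeries.coeff · j) this
  simpa [FormalMultilinearSeries.coeff_ofScalars, tcoeff] using this

lemma tcoeff_congr {f g : ℂ → ℂ} (h : Set.EqOn f g unitDisk) (j : ℕ) : tcoeff f j = tcoeff g j := by
  unfold tcoeff
  rw [h.iteratedDeriv_of_isOpen unitDisk_isOpen j zero_mem_unitDisk]

lemma tcoeff_pow_mul {h : ℂ → ℂ} (hh : AnalyticOnNhd ℂ h unitDisk) (m j : ℕ) :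
    tcoeff (fun z => z ^ m * h z) j = if m ≤ j then tcoeff h (j - m) else 0 := by
  refine tcoeff_unique (a := fun j => if m ≤ j then tcoeff h (j - m) else 0) ?_ j
  intro z hz
  have h1 := (tcoeff_hasSum hh hz).mul_left (z ^ m)
  have h2 : Function.Injective (fun k : ℕ => k + m) := add_left_injective m
  rw [← h2.hasSum_iff]
  · refine (hasSum_congr' fun k => ?_).mpr h1
    simp only [Function.comp, le_add_iff_nonneg_left, zero_le, if_true, Nat.add_sub_cancel]
    ring
  · intro x hx
    have : ¬ m ≤ x := fun h => hx ⟨x - m, by simp; omega⟩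
    simp [this]

lemma iteratedDeriv_hasSum {f : ℂ → ℂ} (hf : AnalyticOnNhd ℂ f unitDisk) {z : ℂ}
    (hz : z ∈ unitDisk) (m : ℕ) :
    HasSum (fun k => tcoeff f (k + m) * ((k + m).factorial / k.factorial : ℂ) * z ^ k)
      (iteratedDeriv m f z) := by
  have h1 : AnalyticOnNhd ℂ (iteratedDeriv m f) unitDisk := by
    rw [iteratedDeriv_eq_iterate]; exact hf.iterated_deriv m
  have := tcoeff_hasSum h1 hz
  convert this using 3 with k
  have : iteratedDeriv k (iteratedDeriv m f) = iteratedDeriv (k + m) f := by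
    simp only [iteratedDeriv_eq_iterate, Function.iterate_add, Function.comp]
  unfold tcoeff
  rw [this]
  have := (k+m).factorial_ne_zero
  field_simp

/-- `s (s+1) ⋯ (s+k-1)` -/
def rising (s : ℝ) (k : ℕ) : ℝ := Real.Gamma (s + k) / Real.Gamma s

lemma rising_succ {s : ℝ} (hs : 0 < s) (k : ℕ) : rising s (k + 1) = rising s k * (s + k) := by
  unfold rising
  have : 0 < s + k := by positivity
  push_cast
  rw [← add_assoc, Real.Gamma_add_one this.ne']
  ring

lemma rising_zero {s : ℝ} (hs : 0 < s) : rising s 0 = 1 := by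
  unfold rising
  simp [(Real.Gamma_pos_of_pos hs).ne']

lemma re_pos_of {w z : ℂ} (hw : w ∈ unitDisk) (hz : z ∈ unitDisk) :
    0 < (1 - (starRingEnd ℂ) w * z).re := by
  rw [mem_unitDisk] at *
  have h1 : ‖(starRingEnd ℂ) w * z‖ < 1 := by
    rw [norm_mul, RCLike.norm_conj]
    nlinarith [norm_nonneg w, norm_nonneg z]
  have := (Complex.re_le_norm ((starRingEnd ℂ) w * z))
  simp only [Complex.sub_re, Complex.one_re]
  linarith

lemma hasDerivAt_pw {w z : ℂ} (hw : w ∈ unitDisk) (hz : z ∈ unitDisk) (s : ℂ) :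
    HasDerivAt (fun z => (1 - (starRingEnd ℂ) w * z) ^ (-s))
      (s * (starRingEnd ℂ) w * (1 - (starRingEnd ℂ) w * z) ^ (-(s + 1))) z := by
  have h0 : HasDerivAt (fun z => (1 - (starRingEnd ℂ) w * z)) (-((starRingEnd ℂ) w)) z := by
    simpa using ((hasDerivAt_id z).const_mul ((starRingEnd ℂ) w)).const_sub 1
  have := h0.cpow_const (c := -s) (Or.inl (re_pos_of hw hz))
  convert this using 1
  rw [show -(s+1) = -s - 1 by ring]
  ring

lemma analytic_pw {w : ℂ} (hw : w ∈ unitDisk) (s : ℂ) :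
    AnalyticOnNhd ℂ (fun z => (1 - (starRingEnd ℂ) w * z) ^ (-s)) unitDisk := by
  apply DifferentiableOn.analyticOnNhd _ unitDisk_isOpen
  intro z hz
  exact (hasDerivAt_pw hw hz s).differentiableAt.differentiableWithinAt

lemma iteratedDeriv_pw {w : ℂ} (hw : w ∈ unitDisk) {s : ℝ} (hs : 0 < s) (k : ℕ) :
    ∀ z ∈ unitDisk, iteratedDeriv k (fun z => (1 - (starRingEnd ℂ) w * z) ^ (-(s : ℂ))) z =
      (starRingEnd ℂ) w ^ k * rising s k * (1 - (starRingEnd ℂ) w * z) ^ (-((s : ℂ) + k)) := by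
  induction k with
  | zero => intro z hz; simp [rising_zero hs]
  | succ k ih =>
    intro z hz
    rw [iteratedDeriv_succ]
    have : (iteratedDeriv k (fun z => (1 - (starRingEnd ℂ) w * z) ^ (-(s : ℂ)))) =ᶠ[nhds z]
      fun z => (starRingEnd ℂ) w ^ k * rising s k *
        (1 - (starRingEnd ℂ) w * z) ^ (-((s : ℂ) + k)) := by
      filter_upwards [unitDisk_isOpen.mem_nhds hz] with y hy using ih y hy
    rw [this.deriv_eq, ((hasDerivAt_pw hw hz (s + k)).const_mul _).deriv, rising_succ hs]
    push_cast
    rw [← add_assoc]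
    ring

lemma tcoeff_pw {w : ℂ} (hw : w ∈ unitDisk) {s : ℝ} (hs : 0 < s) (k : ℕ) :
    tcoeff (fun z => (1 - (starRingEnd ℂ) w * z) ^ (-(s : ℂ))) k =
      (starRingEnd ℂ) w ^ k * rising s k / k.factorial := by
  unfold tcoeff
  rw [iteratedDeriv_pw hw hs k 0 zero_mem_unitDisk]
  simp

lemma wb2_pos {α : ℝ} (hα : -1 < α) (j : ℕ) : 0 < wb2 α j := by
  unfold wb2
  have h1 : 0 < Real.Gamma (α + 2) := Real.Gamma_pos_of_pos (by linarith)
  have h2 : 0 < Real.Gamma ((j : ℝ) + α + 2) := by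
    apply Real.Gamma_pos_of_pos
    have : (0 : ℝ) ≤ j := by positivity
    linarith
  positivity

lemma wb2_succ {α : ℝ} (hα : -1 < α) (j : ℕ) :
    wb2 α (j + 1) * (j + α + 2) = wb2 α j * (j + 1) := by
  unfold wb2
  have : (0 : ℝ) < j + α + 2 := by
    have : (0 : ℝ) ≤ j := by positivity
    linarith
  have h2 : 0 < Real.Gamma ((j : ℝ) + α + 2) := Real.Gamma_pos_of_pos this
  rw [Nat.factorial_succ]
  push_cast
  rw [show (j : ℝ) + 1 + α + 2 = (j + α + 2) + 1 by ring, Real.Gamma_add_one this.ne']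
  field_simp

lemma kern_eq {α : ℝ} (m : ℕ) (w z : ℂ) : kern α m w z =
    z ^ m * ((m.factorial / wb2 α m : ℂ) *
      (1 - (starRingEnd ℂ) w * z) ^ (-(((m + α + 2 : ℝ)) : ℂ))) := by
  unfold kern
  rw [Complex.cpow_neg]
  push_cast
  rw [mul_div_assoc, div_mul_eq_div_div]
  simp only [div_eq_mul_inv]
  ring

lemma analytic_kern {α : ℝ} (m : ℕ) {w : ℂ} (hw : w ∈ unitDisk) :
    AnalyticOnNhd ℂ (kern α m w) unitDisk := by
  rw [show kern α m w = _ from funext (kern_eq m w)]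
  intro z hz
  exact (analyticAt_id.pow m).mul (analyticAt_const.mul (analytic_pw hw _ z hz))

lemma tcoeff_const_mul {h : ℂ → ℂ} (hh : AnalyticOnNhd ℂ h unitDisk) (r : ℂ) (j : ℕ) :
    tcoeff (fun z => r * h z) j = r * tcoeff h j := by
  refine tcoeff_unique (a := fun j => r * tcoeff h j) ?_ j
  intro z hz
  simpa [mul_assoc] using (tcoeff_hasSum hh hz).mul_left r

lemma tcoeff_kern {α : ℝ} (hα : -1 < α) (m : ℕ) {w : ℂ} (hw : w ∈ unitDisk) (j : ℕ) :
    tcoeff (kern α m w) j = if m ≤ j then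
      (starRingEnd ℂ) w ^ (j - m) * ((j.factorial / ((j - m).factorial * wb2 α j) : ℝ) : ℂ)
      else 0 := by
  have hs : (0 : ℝ) < m + α + 2 := by
    have : (0 : ℝ) ≤ m := by positivity
    linarith
  have h0 := analytic_pw hw ((m + α + 2 : ℝ) : ℂ)
  rw [show kern α m w = _ from funext (kern_eq m w), tcoeff_pow_mul (h := fun z => (m.factorial / wb2 α m : ℂ) *
      (1 - (starRingEnd ℂ) w * z) ^ (-(((m + α + 2 : ℝ)) : ℂ))) (fun z hz =>
    analyticAt_const.mul (h0 z hz)), tcoeff_const_mul h0, tcoeff_pw hw hs]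
  split_ifs with hmj
  · obtain ⟨k, rfl⟩ := Nat.exists_eq_add_of_le hmj
    rw [Nat.add_sub_cancel_left]
    have h1 : 0 < Real.Gamma (α + 2) := Real.Gamma_pos_of_pos (by linarith)
    have h2 := Real.Gamma_pos_of_pos hs
    have h3 : 0 < Real.Gamma ((m : ℝ) + k + α + 2) := Real.Gamma_pos_of_pos (by
      have : (0 : ℝ) ≤ k := by positivity
      linarith)
    have key : (m.factorial / wb2 α m * rising (m + α + 2) k / k.factorial : ℝ) =
      (m + k).factorial / (k.factorial * wb2 α (m + k)) := by
      unfold wb2 rising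
      push_cast
      rw [show (m : ℝ) + α + 2 + k = m + k + α + 2 by ring]
      have := m.factorial_pos
      have := k.factorial_pos
      have := (m + k).factorial_pos
      field_simp
    rw [← key]
    push_cast
    ring
  · rfl

lemma summable_aux {α : ℝ} (hα : -1 < α) (m : ℕ) {r : ℝ} (hr0 : 0 ≤ r) (hr : r < 1) :
    Summable (fun k : ℕ => r ^ k * (((k + m).factorial : ℝ) / k.factorial) ^ 2 / wb2 α (k + m)) := by
  obtain ⟨r', hrr', hr'⟩ := exists_between hr
  refine summable_of_ratio_norm_eventually_le hr' ?_
  have t1 : Filter.Tendsto (fun k : ℕ => (((m + 1 : ℝ) + 1 * k) / ((1 : ℝ) + 1 * k)) ^ 2 *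
      (((m + α + 2 : ℝ) + 1 * k) / ((m + 1 : ℝ) + 1 * k)) * r) Filter.atTop (nhds ((1 / 1) ^ 2 * (1 / 1) * r)) :=
    (((tendsto_add_mul_div_add_mul_atTop_nhds _ _ _ one_ne_zero).pow 2).mul
      (tendsto_add_mul_div_add_mul_atTop_nhds _ _ _ one_ne_zero)).mul_const r
  have h1 := t1.eventually_lt_const (u := r') (by simpa using hrr')
  filter_upwards [h1] with k hk
  have hb := wb2_pos hα (k + m)
  have hb' := wb2_pos hα (k + m + 1)
  have hs := wb2_succ hα (k + m)
  have hg : (0 : ℝ) < m + α + 2 + 1 * k := by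
    have : (0 : ℝ) ≤ k := by positivity
    have : (0 : ℝ) ≤ m := by positivity
    linarith
  have e : r ^ (k + 1) * (((k + 1 + m).factorial : ℝ) / (k + 1).factorial) ^ 2 / wb2 α (k + 1 + m)
    = ((((m + 1 : ℝ) + 1 * k) / ((1 : ℝ) + 1 * k)) ^ 2 *
      (((m + α + 2 : ℝ) + 1 * k) / ((m + 1 : ℝ) + 1 * k)) * r) *
      (r ^ k * (((k + m).factorial : ℝ) / k.factorial) ^ 2 / wb2 α (k + m)) := by
    rw [show k + 1 + m = k + m + 1 by ring]
    have hs' : wb2 α (k + m) = wb2 α (k + m + 1) * (m + α + 2 + 1 * k) / (m + 1 + 1 * k) := by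
      rw [eq_div_iff (by positivity)]
      push_cast at hs
      linarith
    rw [hs', Nat.factorial_succ, Nat.factorial_succ]
    push_cast
    generalize hG : (m : ℝ) + α + 2 + 1 * k = G at *
    have := k.factorial_pos
    have := (k + m).factorial_pos
    field_simp
    ring
  rw [e, norm_mul]
  apply mul_le_mul_of_nonneg_right _ (norm_nonneg _)
  rw [Real.norm_of_nonneg (by positivity)]
  exact hk.le

lemma summable_kern {α : ℝ} (hα : -1 < α) (m : ℕ) {w : ℂ} (hw : w ∈ unitDisk) :
    Summable (fun j => ‖tcoeff (kern α m w) j‖ ^ 2 * wb2 α j) := by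
  have h1 := mem_unitDisk.1 hw
  rw [← summable_nat_add_iff m]
  have := summable_aux hα m (r := ‖w‖ ^ 2) (by positivity) (by nlinarith [norm_nonneg w])
  refine (summable_congr fun k => ?_).mpr this
  have hb := wb2_pos hα (k + m)
  rw [tcoeff_kern hα m hw, if_pos (by omega), norm_mul, Nat.add_sub_cancel, norm_pow,
    RCLike.norm_conj, Complex.norm_real, Real.norm_of_nonneg (by positivity)]
  field_simp
  ring

section model
variable {α : ℝ} {H : Type} [NormedAddCommGroup H] [InnerProductSpace ℂ H]

lemma exists_kern (hα : -1 < α) (M : BergmanModel α H) (m : ℕ) {w : ℂ} (hw : w ∈ unitDisk) :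
    ∃ k : H, Set.EqOn (M.emb k) (kern α m w) unitDisk ∧
      ∀ f : H, (@inner ℂ H _ k f) = iteratedDeriv m (M.emb f) w := by
  obtain ⟨k, hk⟩ := M.exists_rep (kern α m w) (analytic_kern m hw) (summable_kern hα m hw)
  refine ⟨k, hk, fun f => ?_⟩
  rw [M.inner_eq]
  have h1 := iteratedDeriv_hasSum (M.analyticOn f) hw m
  have h2 : Function.Injective (fun k : ℕ => k + m) := add_left_injective m
  apply HasSum.tsum_eq
  rw [← h2.hasSum_iff]
  · refine (hasSum_congr' fun j => ?_).mpr h1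
    have hb := (wb2_pos hα (j + m)).ne'
    simp only [Function.comp]
    rw [tcoeff_congr hk, tcoeff_kern hα m hw, if_pos (by omega), Nat.add_sub_cancel]
    simp only [map_mul, map_pow, Complex.conj_conj, Complex.conj_ofReal]
    push_cast
    have hb' : (wb2 α (j + m) : ℂ) ≠ 0 := by exact_mod_cast hb
    have := j.factorial_ne_zero
    have : (j.factorial : ℂ) ≠ 0 := by exact_mod_cast this
    field_simp
  · intro x hx
    have : ¬ m ≤ x := fun h => hx ⟨x - m, by simp; omega⟩
    simp [tcoeff_congr hk, tcoeff_kern hα m hw, this]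

/-- the kernel as an element of the model -/
def ker (hα : -1 < α) (M : BergmanModel α H) (m : ℕ) (w : unitDisk) : H :=
  (exists_kern hα M m w.2).choose

lemma emb_ker (hα : -1 < α) (M : BergmanModel α H) (m : ℕ) (w : unitDisk) :
    Set.EqOn (M.emb (ker hα M m w)) (kern α m w) unitDisk :=
  (exists_kern hα M m w.2).choose_spec.1

lemma inner_ker (hα : -1 < α) (M : BergmanModel α H) (m : ℕ) (w : unitDisk) (f : H) :
    (@inner ℂ H _ (ker hα M m w) f) = iteratedDeriv m (M.emb f) w :=
  (exists_kern hα M m w.2).choose_spec.2 f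

lemma inner_ker_succ_ne (hα : -1 < α) (M : BergmanModel α H) (n : ℕ) (c : unitDisk)
    (hc : (c : ℂ) ≠ 0) : (@inner ℂ H _ (ker hα M n c) (ker hα M (n + 1) c)) ≠ 0 := by
  intro h0
  rw [inner_ker] at h0
  have h1 := iteratedDeriv_hasSum (M.analyticOn (ker hα M (n + 1) c)) c.2 n
  rw [h0, ← hasSum_nat_add_iff' 1] at h1
  have hz : tcoeff (M.emb (ker hα M (n + 1) c)) n = 0 := by
    rw [tcoeff_congr (emb_ker hα M _ c), tcoeff_kern hα _ c.2, if_neg (by omega)]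
  have h2 := h1.mul_left ((c : ℂ)⁻¹)
  simp only [Finset.sum_range_one, zero_add, hz, zero_mul, sub_zero, mul_zero] at h2
  have h3 : HasSum (fun k : ℕ => (‖(c : ℂ)‖ ^ 2) ^ k *
      ((k + 1 + n).factorial / (k.factorial * wb2 α (k + 1 + n)) *
        ((k + 1 + n).factorial / (k + 1).factorial))) (0 : ℝ) := by
    rw [← Complex.hasSum_ofReal]
    refine (hasSum_congr' fun k => ?_).mpr h2
    rw [tcoeff_congr (emb_ker hα M _ c), tcoeff_kern hα _ c.2, if_pos (by omega),
      show k + 1 + n - (n + 1) = k by omega]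
    push_cast
    rw [← Complex.conj_mul', pow_succ, mul_pow]
    field_simp
  rw [hasSum_zero_iff_of_nonneg] at h3
  · have := congrFun h3 0
    have hb := wb2_pos hα (0 + 1 + n)
    have h4 : (0 : ℝ) < (‖(c : ℂ)‖ ^ 2) ^ 0 *
      ((0 + 1 + n).factorial / ((0 : ℕ).factorial * wb2 α (0 + 1 + n)) *
        ((0 + 1 + n).factorial / (0 + 1 : ℕ).factorial)) := by positivity
    exact h4.ne' this
  · intro k
    have hb := wb2_pos hα (k + 1 + n)
    show (0 : ℝ) ≤ _
    positivity

lemma ext_inner (M : BergmanModel α H) (hα : -1 < α) {f g : H}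
    (h : ∀ w : unitDisk, (@inner ℂ H _ (ker hα M 0 w) f) = (@inner ℂ H _ (ker hα M 0 w) g)) :
    f = g := by
  apply M.inj
  intro w hw
  have := h ⟨w, hw⟩
  simpa [inner_ker] using this

end model

lemma cpow_prod {x₁ y₁ x₂ y₂ : ℂ} (h1 : 0 < x₁.re) (h2 : 0 < y₁.re) (h3 : 0 < x₂.re)
    (h4 : 0 < y₂.re) (h : x₁ * y₁ = x₂ * y₂) (s : ℂ) : x₁ ^ s * y₁ ^ s = x₂ ^ s * y₂ ^ s := by
  have aux : ∀ x y : ℂ, 0 < x.re → 0 < y.re → x ^ s * y ^ s = (x * y) ^ s := by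
    intro x y hx hy
    have hx0 : x ≠ 0 := by rintro rfl; simp at hx
    have hy0 : y ≠ 0 := by rintro rfl; simp at hy
    have a1 := abs_lt.1 (Complex.abs_arg_lt_pi_div_two_iff.2 (Or.inl hx))
    have a2 := abs_lt.1 (Complex.abs_arg_lt_pi_div_two_iff.2 (Or.inl hy))
    rw [Complex.cpow_def_of_ne_zero hx0, Complex.cpow_def_of_ne_zero hy0,
      Complex.cpow_def_of_ne_zero (mul_ne_zero hx0 hy0), ← Complex.exp_add,
      Complex.log_mul hx0 hy0 ⟨by linarith, by linarith⟩]
    congr 1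
    ring
  rw [aux _ _ h1 h2, aux _ _ h3 h4, h]

lemma conj_cpow_real {x : ℂ} (hx : 0 < x.re) (s : ℝ) :
    (starRingEnd ℂ) (x ^ (-(s : ℂ))) = ((starRingEnd ℂ) x) ^ (-(s : ℂ)) := by
  have a1 := abs_lt.1 (Complex.abs_arg_lt_pi_div_two_iff.2 (Or.inl hx))
  have : x.arg ≠ Real.pi := by have := Real.pi_pos; linarith
  rw [Complex.conj_cpow _ _ this]
  simp

lemma tcoeff_zero (h : ℂ → ℂ) : tcoeff h 0 = h 0 := by simp [tcoeff]

lemma tcoeff_one (h : ℂ → ℂ) : tcoeff h 1 = deriv h 0 := by simp [tcoeff]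

lemma iteratedDeriv_zero_eq (h : ℂ → ℂ) (j : ℕ) :
    iteratedDeriv j h 0 = j.factorial * tcoeff h j := by
  have : (j.factorial : ℂ) ≠ 0 := by exact_mod_cast j.factorial_ne_zero
  unfold tcoeff
  field_simp

/-- the origin as a point of the disk -/
def oD : unitDisk := ⟨0, zero_mem_unitDisk⟩

section model2
variable {α : ℝ} {H : Type} [NormedAddCommGroup H] [InnerProductSpace ℂ H]

lemma inner_E (hα : -1 < α) (M : BergmanModel α H) (m : ℕ) (f : H) :
    (@inner ℂ H _ (ker hα M m oD) f) = m.factorial * tcoeff (M.emb f) m := by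
  rw [inner_ker, ← iteratedDeriv_zero_eq]; rfl

lemma ext_E (hα : -1 < α) (M : BergmanModel α H) {f g : H}
    (h : ∀ m : ℕ, (@inner ℂ H _ (ker hα M m oD) f) = (@inner ℂ H _ (ker hα M m oD) g)) :
    f = g := by
  apply M.inj
  intro z hz
  have h1 := tcoeff_hasSum (M.analyticOn f) hz
  have h2 := tcoeff_hasSum (M.analyticOn g) hz
  have : ∀ j, tcoeff (M.emb f) j = tcoeff (M.emb g) j := by
    intro j
    have := h j
    rw [inner_E, inner_E] at this
    exact mul_left_cancel₀ (by exact_mod_cast j.factorial_ne_zero) this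
  simp only [this] at h1
  exact h1.unique h2

lemma deriv_ker (hα : -1 < α) (M : BergmanModel α H) (n m : ℕ) (u w : unitDisk) :
    iteratedDeriv n (M.emb (ker hα M m w)) u =
      (starRingEnd ℂ) (iteratedDeriv m (M.emb (ker hα M n u)) w) := by
  rw [← inner_ker, ← inner_ker, inner_conj_symm]

lemma deriv_E (hα : -1 < α) (M : BergmanModel α H) (n m : ℕ) (u : unitDisk) :
    iteratedDeriv n (M.emb (ker hα M m oD)) u = if n ≤ m then
      (u : ℂ) ^ (m - n) * (m.factorial * m.factorial / ((m - n).factorial * wb2 α m)) else 0 := by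
  rw [deriv_ker, show ((oD : unitDisk) : ℂ) = 0 from rfl, iteratedDeriv_zero_eq,
    tcoeff_congr (emb_ker hα M n u), tcoeff_kern hα _ u.2]
  split_ifs with h
  · simp only [map_mul, map_pow, Complex.conj_conj, Complex.conj_ofReal, map_natCast]
    push_cast
    ring
  · simp

lemma emb_E (hα : -1 < α) (M : BergmanModel α H) (m : ℕ) (z : ℂ) (hz : z ∈ unitDisk) :
    M.emb (ker hα M m oD) z = m.factorial / wb2 α m * z ^ m := by
  rw [emb_ker hα M m oD hz, kern_eq]
  simp [oD]
  ring

end model2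

section main
variable {α : ℝ} {H : Type} [NormedAddCommGroup H] [InnerProductSpace ℂ H] [CompleteSpace H]

open ContinuousLinearMap in
lemma normal_c0 (hα : -1 < α) (n : ℕ) (M : BergmanModel α H) (a b : ℂ) (ψ φ : ℂ → ℂ)
    (hψ : ∀ z ∈ unitDisk, ψ z = a / n.factorial * z ^ n)
    (hφ : ∀ z ∈ unitDisk, φ z = b * z)
    (hφm : ∀ z ∈ unitDisk, φ z ∈ unitDisk)
    (T : H →L[ℂ] H)
    (hT : ∀ f : H, ∀ z ∈ unitDisk,
      M.emb (T f) z = ψ z * iteratedDeriv n (M.emb f) (φ z)) :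
    T.comp (adjoint T) = (adjoint T).comp T := by
  have h1 : ∀ m : ℕ, ∃ l : ℂ, T (ker hα M m oD) = l • ker hα M m oD := by
    intro m
    have hb : (wb2 α m : ℂ) ≠ 0 := by exact_mod_cast (wb2_pos hα m).ne'
    refine ⟨if n ≤ m then a / n.factorial * b ^ (m - n) * (m.factorial / (m - n).factorial)
      else 0, ?_⟩
    apply M.inj
    intro z hz
    have := deriv_E hα M n m ⟨φ z, hφm z hz⟩
    simp only at this
    rw [hT _ z hz, this, map_smul, Pi.smul_apply, emb_E hα M m z hz, hψ z hz, hφ z hz]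
    split_ifs with hnm
    · obtain ⟨k, rfl⟩ := Nat.exists_eq_add_of_le hnm
      simp only [Nat.add_sub_cancel_left, smul_eq_mul]
      rw [mul_pow, pow_add]
      ring
    · simp
  choose l hl using h1
  have h2 : ∀ m, adjoint T (ker hα M m oD) = (starRingEnd ℂ) (l m) • ker hα M m oD := by
    intro m
    apply ext_E hα M
    intro j
    rw [adjoint_inner_right, hl, inner_smul_left, inner_smul_right]
    by_cases hjm : j = m
    · rw [hjm]
    · have : (@inner ℂ H _ (ker hα M j oD) (ker hα M m oD)) = 0 := by
        rw [inner_ker, deriv_E]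
        split_ifs with h
        · simp [oD, show m - j ≠ 0 by omega]
        · rfl
      rw [this]; simp
  ext f
  apply ext_E hα M
  intro j
  simp only [comp_apply]
  rw [← adjoint_inner_left, adjoint_inner_right, adjoint_inner_right, h2, hl, ← adjoint_inner_left,
    map_smul, map_smul, hl, h2, ]
  rw [inner_smul_left, inner_smul_left, inner_smul_left]
  rw [inner_smul_left]
  ring

open ContinuousLinearMap in
lemma adjoint_ker (hα : -1 < α) (n : ℕ) (M : BergmanModel α H) (ψ φ : ℂ → ℂ)
    (hφm : ∀ z ∈ unitDisk, φ z ∈ unitDisk)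
    (T : H →L[ℂ] H)
    (hT : ∀ f : H, ∀ z ∈ unitDisk,
      M.emb (T f) z = ψ z * iteratedDeriv n (M.emb f) (φ z)) (w : unitDisk) :
    adjoint T (ker hα M 0 w) =
      (starRingEnd ℂ) (ψ w) • ker hα M n ⟨φ w, hφm w w.2⟩ := by
  apply ext_inner_right ℂ
  intro f
  rw [adjoint_inner_left, inner_ker, inner_smul_left, inner_ker, iteratedDeriv_zero,
    hT f w w.2, Complex.conj_conj]

open ContinuousLinearMap in
lemma normal_real (hα : -1 < α) (n : ℕ) (M : BergmanModel α H) (a c : ℂ) (b : ℝ) (ha : a ≠ 0)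
    (hc : c ∈ unitDisk) (ψ φ : ℂ → ℂ)
    (hψ : ∀ z ∈ unitDisk, ψ z = a / n.factorial * z ^ n *
      (1 - (starRingEnd ℂ) c * z) ^ (-((n + α + 2 : ℝ) : ℂ)))
    (hφ : ∀ z ∈ unitDisk, φ z = c + b * z / (1 - (starRingEnd ℂ) c * z))
    (hφm : ∀ z ∈ unitDisk, φ z ∈ unitDisk)
    (T : H →L[ℂ] H)
    (hT : ∀ f : H, ∀ z ∈ unitDisk,
      M.emb (T f) z = ψ z * iteratedDeriv n (M.emb f) (φ z)) :
    T.comp (adjoint T) = (adjoint T).comp T := by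
  have hca : (starRingEnd ℂ) a ≠ 0 := by simpa using ha
  have h1 : ∀ w : unitDisk, adjoint T (ker hα M 0 w) =
      ((starRingEnd ℂ) a / a) • T (ker hα M 0 w) := by
    intro w
    rw [adjoint_ker hα n M ψ φ hφm T hT]
    apply M.inj
    intro z hz
    have e1 := deriv_ker hα M n 0 ⟨φ z, hφm z hz⟩ w
    simp only [iteratedDeriv_zero] at e1
    rw [map_smul, map_smul, Pi.smul_apply, Pi.smul_apply, hT _ z hz, e1,
      emb_ker hα M n _ w.2, emb_ker hα M n _ hz, kern_eq, kern_eq, hψ z hz, hψ w w.2]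
    obtain ⟨w, hw⟩ := w
    simp only [smul_eq_mul, map_mul, map_pow, map_div₀, map_natCast, Complex.conj_ofReal]
    have p1 := re_pos_of hc hw
    have p2 := re_pos_of hc hz
    have p3 := re_pos_of (hφm w hw) hz
    have p4 := re_pos_of (hφm z hz) hw
    rw [conj_cpow_real p1, conj_cpow_real p4]
    have key := cpow_prod (x₁ := (starRingEnd ℂ) (1 - (starRingEnd ℂ) c * w))
      (y₁ := 1 - (starRingEnd ℂ) (φ w) * z) (x₂ := 1 - (starRingEnd ℂ) c * z)
      (y₂ := (starRingEnd ℂ) (1 - (starRingEnd ℂ) (φ z) * w)) (by simpa using p1) p3 p2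
      (by simpa using p4) (by
        have q1 : 1 - c * (starRingEnd ℂ) w ≠ 0 := by
          intro h
          have : (starRingEnd ℂ) (1 - (starRingEnd ℂ) c * w) = 0 := by simpa using h
          rw [map_eq_zero] at this
          rw [this] at p1; simp at p1
        have q2 : 1 - (starRingEnd ℂ) c * z ≠ 0 := by
          intro h; rw [h] at p2; simp at p2
        rw [hφ w hw, hφ z hz]
        simp only [map_sub, map_one, map_mul, Complex.conj_conj, map_add, map_div₀,
          Complex.conj_ofReal]
        field_simp
        ring) (-((n + α + 2 : ℝ) : ℂ))
    set X1 := (starRingEnd ℂ) (1 - (starRingEnd ℂ) c * w) ^ (-((n + α + 2 : ℝ) : ℂ))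
    set Y1 := (1 - (starRingEnd ℂ) (φ w) * z) ^ (-((n + α + 2 : ℝ) : ℂ))
    set X2 := (1 - (starRingEnd ℂ) c * z) ^ (-((n + α + 2 : ℝ) : ℂ))
    set Y2 := (starRingEnd ℂ) (1 - (starRingEnd ℂ) (φ z) * w) ^ (-((n + α + 2 : ℝ) : ℂ))
    have e : ∀ p q : ℂ, (starRingEnd ℂ) a / a * (a * p * q) = (starRingEnd ℂ) a * p * q := by
      intro p q; field_simp
    calc _ = ((starRingEnd ℂ) a / n.factorial * (starRingEnd ℂ) w ^ n * z ^ n *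
          (n.factorial / wb2 α n)) * (X1 * Y1) := by ring
      _ = ((starRingEnd ℂ) a / n.factorial * (starRingEnd ℂ) w ^ n * z ^ n *
          (n.factorial / wb2 α n)) * (X2 * Y2) := by rw [key]
      _ = _ := by
        field_simp
  have h2 : T = (a / (starRingEnd ℂ) a) • adjoint T := by
    ext f
    apply ext_inner M hα
    intro w
    rw [← adjoint_inner_left, h1, inner_smul_left, smul_apply, inner_smul_right,
      adjoint_inner_right]
    simp
  generalize adjoint T = S at h2 ⊢
  subst h2
  ext f
  simp

open ContinuousLinearMap in
lemma real_of_normal (hα : -1 < α) (n : ℕ) (M : BergmanModel α H) (a b c : ℂ) (ha : a ≠ 0)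
    (hc : c ∈ unitDisk) (hc0 : c ≠ 0) (ψ φ : ℂ → ℂ)
    (hψ : ∀ z ∈ unitDisk, ψ z = a / n.factorial * z ^ n *
      (1 - (starRingEnd ℂ) c * z) ^ (-((n + α + 2 : ℝ) : ℂ)))
    (hφ : ∀ z ∈ unitDisk, φ z = c + b * z / (1 - (starRingEnd ℂ) c * z))
    (hφm : ∀ z ∈ unitDisk, φ z ∈ unitDisk)
    (T : H →L[ℂ] H)
    (hT : ∀ f : H, ∀ z ∈ unitDisk,
      M.emb (T f) z = ψ z * iteratedDeriv n (M.emb f) (φ z))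
    (hN : T.comp (adjoint T) = (adjoint T).comp T) : (starRingEnd ℂ) b = b := by
  set C : unitDisk := ⟨c, hc⟩ with hC
  set s : ℝ := n + α + 2 with hs
  have hb0 : (wb2 α n : ℂ) ≠ 0 := by exact_mod_cast (wb2_pos hα n).ne'
  have hb1 : (wb2 α (n + 1) : ℂ) ≠ 0 := by exact_mod_cast (wb2_pos hα (n + 1)).ne'
  have hn0 : (n.factorial : ℂ) ≠ 0 := by exact_mod_cast n.factorial_ne_zero
  have hss : (wb2 α (n + 1) : ℂ) * s = wb2 α n * (n + 1) := by
    exact_mod_cast wb2_succ hα n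
  have hne : ∀ z ∈ unitDisk, 1 - (starRingEnd ℂ) c * z ≠ 0 := by
    intro z hz h
    have := re_pos_of hc hz
    rw [h] at this; simp at this
  have t1 : T (ker hα M n oD) = a • ker hα M n C := by
    apply M.inj
    intro z hz
    have := deriv_E hα M n n ⟨φ z, hφm z hz⟩
    simp only at this
    rw [hT _ z hz, this, map_smul, Pi.smul_apply, emb_ker hα M n C hz, kern_eq, hψ z hz, ← hs,
      if_pos le_rfl, show ((C : unitDisk) : ℂ) = c from rfl]
    generalize (1 - (starRingEnd ℂ) c * z) ^ (-(s : ℂ)) = X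
    simp only [smul_eq_mul, Nat.sub_self, pow_zero, Nat.factorial_zero, Nat.cast_one]
    field_simp
  have t2 : T (ker hα M (n + 1) oD) =
      (a * (n + 1)) • ((s * c) • ker hα M n C + b • ker hα M (n + 1) C) := by
    apply M.inj
    intro z hz
    have := deriv_E hα M n (n + 1) ⟨φ z, hφm z hz⟩
    simp only at this
    have hq := hne z hz
    rw [hT _ z hz, this, map_smul, map_add, map_smul, map_smul, Pi.smul_apply, Pi.add_apply,
      Pi.smul_apply, Pi.smul_apply, emb_ker hα M n C hz, emb_ker hα M (n + 1) C hz,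
      kern_eq, kern_eq, hψ z hz, hφ z hz]
    have e1 : (1 - (starRingEnd ℂ) c * z) ^ (-(((n + 1 : ℕ) + α + 2 : ℝ) : ℂ)) =
        (1 - (starRingEnd ℂ) c * z) ^ (-(s : ℂ)) / (1 - (starRingEnd ℂ) c * z) := by
      rw [show (-(((n + 1 : ℕ) + α + 2 : ℝ) : ℂ)) = -(s : ℂ) - 1 by rw [hs]; push_cast; ring,
        Complex.cpow_sub _ _ hq, Complex.cpow_one]
    have e2 : (s : ℂ) = wb2 α n * (n + 1) / wb2 α (n + 1) := by
      rw [eq_div_iff hb1, ← hss]; ring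
    rw [show ((C : unitDisk) : ℂ) = c from rfl, e1]
    rw [if_pos (by omega), show n + 1 - n = 1 by omega, ← hs]
    generalize (1 - (starRingEnd ℂ) c * z) ^ (-(s : ℂ)) = X
    rw [e2, Nat.factorial_succ]
    push_cast
    simp only [smul_eq_mul, Nat.factorial_one, Nat.cast_one, pow_one, one_mul]
    field_simp
    ring
  -- the germ at zero
  have hcoef : ∀ f : H, tcoeff (M.emb (T f)) n = a / n.factorial * iteratedDeriv n (M.emb f) c ∧
      tcoeff (M.emb (T f)) (n + 1) = a / n.factorial *
        (s * (starRingEnd ℂ) c * iteratedDeriv n (M.emb f) c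
          + b * iteratedDeriv (n + 1) (M.emb f) c) := by
    intro f
    set F := iteratedDeriv n (M.emb f) with hF
    have hFa : AnalyticOnNhd ℂ F unitDisk := by
      rw [hF, iteratedDeriv_eq_iterate]; exact (M.analyticOn f).iterated_deriv n
    set p : ℂ → ℂ := fun z => c + b * z / (1 - (starRingEnd ℂ) c * z) with hp
    have hpd : ∀ z ∈ unitDisk, p z ∈ unitDisk := by
      intro z hz; rw [hp]; simp only; rw [← hφ z hz]; exact hφm z hz
    have hlin : ∀ z, HasDerivAt (fun z => (1 - (starRingEnd ℂ) c * z)) (-((starRingEnd ℂ) c)) z := by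
      intro z
      simpa using ((hasDerivAt_id z).const_mul ((starRingEnd ℂ) c)).const_sub 1
    have hpder : ∀ z ∈ unitDisk, HasDerivAt p ((b * (1 - (starRingEnd ℂ) c * z) -
        b * z * (-((starRingEnd ℂ) c))) / (1 - (starRingEnd ℂ) c * z) ^ 2) z := by
      intro z hz
      have h0 : HasDerivAt (fun z : ℂ => b * z) b z := by
        simpa using (hasDerivAt_id z).const_mul b
      exact (h0.div (hlin z) (hne z hz)).const_add c
    set q : ℂ → ℂ := fun z => a / n.factorial *
      ((1 - (starRingEnd ℂ) c * z) ^ (-(s : ℂ)) * F (p z)) with hq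
    have hqder : ∀ z ∈ unitDisk, HasDerivAt q (a / n.factorial *
        ((s * (starRingEnd ℂ) c * (1 - (starRingEnd ℂ) c * z) ^ (-((s : ℂ) + 1))) * F (p z) +
        (1 - (starRingEnd ℂ) c * z) ^ (-(s : ℂ)) * (deriv F (p z) *
          ((b * (1 - (starRingEnd ℂ) c * z) -
        b * z * (-((starRingEnd ℂ) c))) / (1 - (starRingEnd ℂ) c * z) ^ 2)))) z := by
      intro z hz
      have hFd : HasDerivAt F (deriv F (p z)) (p z) :=
        (hFa (p z) (hpd z hz)).differentiableAt.hasDerivAt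
      exact ((hasDerivAt_pw hc hz s).mul (hFd.comp z (hpder z hz))).const_mul _
    have hqa : AnalyticOnNhd ℂ q unitDisk := by
      apply DifferentiableOn.analyticOnNhd _ unitDisk_isOpen
      intro z hz
      exact (hqder z hz).differentiableAt.differentiableWithinAt
    have heq : Set.EqOn (M.emb (T f)) (fun z => z ^ n * q z) unitDisk := by
      intro z hz
      simp only [hq, hp]
      rw [hT f z hz, hψ z hz, ← hφ z hz]
      ring
    rw [tcoeff_congr heq, tcoeff_congr heq, tcoeff_pow_mul hqa, tcoeff_pow_mul hqa,
      if_pos le_rfl, if_pos (by omega), Nat.sub_self, show n + 1 - n = 1 by omega,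
      tcoeff_zero, tcoeff_one, (hqder 0 zero_mem_unitDisk).deriv, iteratedDeriv_succ, ← hF]
    constructor
    · simp [hq, hp]
    · simp [hp]
      left
      ring
  have t3 : adjoint T (ker hα M n oD) = (starRingEnd ℂ) a • ker hα M n C := by
    apply ext_inner_right ℂ
    intro f
    rw [adjoint_inner_left, inner_E, inner_smul_left, inner_ker, (hcoef f).1, Complex.conj_conj]
    field_simp
    rfl
  have t4 : adjoint T (ker hα M (n + 1) oD) = ((starRingEnd ℂ) a * (n + 1)) •
      ((s * c) • ker hα M n C + (starRingEnd ℂ) b • ker hα M (n + 1) C) := by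
    apply ext_inner_right ℂ
    intro f
    rw [adjoint_inner_left, inner_E, inner_smul_left, inner_add_left, inner_smul_left,
      inner_smul_left, inner_ker, inner_ker, (hcoef f).2, Nat.factorial_succ]
    simp only [map_mul, map_add, map_one, map_natCast, Complex.conj_conj, Complex.conj_ofReal]
    push_cast
    rw [show ((C : unitDisk) : ℂ) = c from rfl]
    field_simp
  have hin : (@inner ℂ H _ (T (ker hα M n oD)) (T (ker hα M (n + 1) oD))) =
      (@inner ℂ H _ (adjoint T (ker hα M n oD)) (adjoint T (ker hα M (n + 1) oD))) := by
    rw [← adjoint_inner_left, adjoint_inner_right]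
    have := congrArg (fun S : H →L[ℂ] H => S (ker hα M n oD)) hN
    simp only [comp_apply] at this
    rw [this]
  rw [t1, t2, t3, t4] at hin
  simp only [inner_smul_left, inner_smul_right, inner_add_right, Complex.conj_conj] at hin
  have hX := inner_ker_succ_ne hα M n C hc0
  have hca : (starRingEnd ℂ) a ≠ 0 := by simpa using ha
  have hn1 : (n + 1 : ℂ) ≠ 0 := by exact_mod_cast n.succ_ne_zero
  have : (a * (starRingEnd ℂ) a * (n + 1) * (@inner ℂ H _ (ker hα M n C) (ker hα M (n + 1) C))) *
      (starRingEnd ℂ) b = (a * (starRingEnd ℂ) a * (n + 1) *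
        (@inner ℂ H _ (ker hα M n C) (ker hα M (n + 1) C))) * b := by
    linear_combination -hin
  exact mul_left_cancel₀ (mul_ne_zero (mul_ne_zero (mul_ne_zero ha hca) hn1) hX) this

end main

/-- For `ψ(z) = a z^n/(n!(1-conj(c)z)^{n+α+2})` and
`φ(z) = c + bz/(1-conj(c)z)` with `a, b ≠ 0`, `c ∈ 𝔻`, `φ` a self-map of `𝔻` and
`D_{ψ,φ,n}` bounded on `A_α²`, the operator `D_{ψ,φ,n}` is normal iff `b ∈ ℝ \ {0}`
or `c = 0`. -/
theorem stmt_15 (α : ℝ) (hα : -1 < α) (n : ℕ) (hn : 1 ≤ n)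
    (H : Type) [NormedAddCommGroup H] [InnerProductSpace ℂ H] [CompleteSpace H]
    (M : BergmanModel α H)
    (a b c : ℂ) (ha : a ≠ 0) (hb : b ≠ 0) (hc : c ∈ unitDisk)
    (ψ φ : ℂ → ℂ)
    (hψ : ∀ z ∈ unitDisk, ψ z = a * z ^ n /
      ((n.factorial : ℂ) * (1 - (starRingEnd ℂ) c * z) ^ ((n : ℂ) + (α : ℂ) + 2)))
    (hφ : ∀ z ∈ unitDisk, φ z = c + b * z / (1 - (starRingEnd ℂ) c * z))
    (hφm : ∀ z ∈ unitDisk, φ z ∈ unitDisk)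
    (T : H →L[ℂ] H)
    (hT : ∀ f : H, ∀ z ∈ unitDisk,
      M.emb (T f) z = ψ z * iteratedDeriv n (M.emb f) (φ z)) :
    T.comp (ContinuousLinearMap.adjoint T) = (ContinuousLinearMap.adjoint T).comp T ↔
      ((∃ r : ℝ, r ≠ 0 ∧ b = (r : ℂ)) ∨ c = 0) := by
  have hψ' : ∀ z ∈ unitDisk, ψ z = a / n.factorial * z ^ n *
      (1 - (starRingEnd ℂ) c * z) ^ (-((n + α + 2 : ℝ) : ℂ)) := by
    intro z hz
    rw [hψ z hz, Complex.cpow_neg]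
    push_cast
    simp only [div_eq_mul_inv, mul_inv]
    ring
  constructor
  · intro hN
    by_cases hc0 : c = 0
    · exact Or.inr hc0
    · left
      have h := real_of_normal hα n M a b c ha hc hc0 ψ φ hψ' hφ hφm T hT hN
      obtain ⟨r, hr⟩ := Complex.conj_eq_iff_real.1 h
      refine ⟨r, ?_, hr⟩
      rintro rfl
      exact hb (by simpa using hr)
  · rintro (⟨r, hr, rfl⟩ | rfl)
    · exact normal_real hα n M a c r ha hc ψ φ hψ' hφ hφm T hT
    · refine normal_c0 hα n M a b ψ φ ?_ ?_ hφm T hT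
      · intro z hz
        rw [hψ' z hz]; simp
      · intro z hz
        rw [hφ z hz]; simp
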